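/- Let h̃ be a metric on a nonempty open set U ⊆ ℝ^n and let E be a smooth vector field on U with L_E h̃ = D̃·h̃ for a smooth function D̃. Then for all vector fields X, Y on U the following identity of 1-forms holds: h̃((∇^{h̃}_Y(∇^{h̃}E))(X)) = h̃(R(h̃)_{Y,E}X) + (1/2)[−h̃(X,Y)·dD̃ + Y(D̃)·h̃(X) + X(D̃)·h̃(Y)], where ∇^{h̃}E is the (1,1)-tensor X ↦ ∇^{h̃}_X E and (∇^{h̃}_Y(∇^{h̃}E))(X) := ∇^{h̃}_Y(∇^{h̃}_X E) − ∇^{h̃}_{∇^{h̃}_Y X} E. -/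

import Mathlib

open scoped BigOperators

noncomputable section

/-- Points of ℝⁿ. -/
abbrev Pt (n : ℕ) := Fin n → ℝ
/-- Vector fields (globally defined functions; conditions are imposed on an open set). -/
abbrev VF (n : ℕ) := Pt n → Fin n → ℝ
/-- 1-forms. -/
abbrev OneForm (n : ℕ) := Pt n → Fin n → ℝ
/-- Metrics: smooth maps into symmetric invertible matrices. -/
abbrev Met (n : ℕ) := Pt n → Matrix (Fin n) (Fin n) ℝ
/-- (1,2)-tensor fields (multiplications on tangent vectors): components `c t k i j` = c^k_{ij}(t). -/
abbrev Mul2 (n : ℕ) := Pt n → Fin n → Fin n → Fin n → ℝ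

variable {n : ℕ}

/-- Partial derivative ∂ᵢ f (t). -/
def pder (i : Fin n) (f : Pt n → ℝ) (t : Pt n) : ℝ :=
  fderiv ℝ f t (Pi.single i 1)

/-- Smoothness (on `U`) of a vector field or a 1-form. -/
def SmoothVF (U : Set (Pt n)) (X : VF n) : Prop :=
  ∀ k, ContDiffOn ℝ (⊤ : ℕ∞) (fun t => X t k) U

def SmoothMet (U : Set (Pt n)) (g : Met n) : Prop :=
  ∀ i j, ContDiffOn ℝ (⊤ : ℕ∞) (fun t => g t i j) U

def SmoothMul2 (U : Set (Pt n)) (c : Mul2 n) : Prop :=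
  ∀ k i j, ContDiffOn ℝ (⊤ : ℕ∞) (fun t => c t k i j) U

/-- `g` is a (pseudo-Riemannian) metric on `U`: smooth, symmetric, invertible. -/
def IsMetricOn (U : Set (Pt n)) (g : Met n) : Prop :=
  SmoothMet U g ∧ ∀ t ∈ U, (g t).IsSymm ∧ IsUnit (g t)

/-- The 1-form g(X). -/
def mdown (g : Met n) (X : VF n) : OneForm n := fun t k => ∑ j, g t k j * X t j
/-- The vector field g*α. -/
def mup (g : Met n) (α : OneForm n) : VF n := fun t k => ∑ j, (g t)⁻¹ k j * α t j
/-- g*(α, β). -/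
def mup2 (g : Met n) (α β : OneForm n) (t : Pt n) : ℝ :=
  ∑ i, ∑ j, (g t)⁻¹ i j * α t i * β t j
/-- g(X, Y). -/
def mdown2 (g : Met n) (X Y : VF n) (t : Pt n) : ℝ :=
  ∑ i, ∑ j, g t i j * X t i * Y t j

/-- Christoffel symbols Γ(g)^k_{ij}(t). -/
def chr (g : Met n) (k i j : Fin n) (t : Pt n) : ℝ :=
  (1/2) * ∑ l, (g t)⁻¹ k l *
    (pder i (fun s => g s j l) t + pder j (fun s => g s i l) t - pder l (fun s => g s i j) t)

/-- Levi-Civita covariant derivative ∇^g_X Y of a vector field. -/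
def covV (g : Met n) (X Y : VF n) : VF n :=
  fun t k => ∑ i, X t i * (pder i (fun s => Y s k) t + ∑ m, chr g k i m t * Y t m)

/-- Levi-Civita covariant derivative ∇^g_X α of a 1-form. -/
def covF (g : Met n) (X : VF n) (α : OneForm n) : OneForm n :=
  fun t k => ∑ i, X t i * (pder i (fun s => α s k) t - ∑ m, chr g m i k t * α t m)

/-- Lie bracket [X, Y]. -/
def vbr (X Y : VF n) : VF n :=
  fun t k => ∑ i, (X t i * pder i (fun s => Y s k) t - Y t i * pder i (fun s => X s k) t)

/-- Curvature R(g)_{X,Y} Z = ∇_X ∇_Y Z − ∇_Y ∇_X Z − ∇_{[X,Y]} Z. -/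
def curvV (g : Met n) (X Y Z : VF n) : VF n :=
  fun t k => covV g X (covV g Y Z) t k - covV g Y (covV g X Z) t k
    - covV g (vbr X Y) Z t k

/-- Curvature acting on 1-forms: (R(g)_{X,Y} α)(Z) = −α(R(g)_{X,Y} Z). -/
def curvF (g : Met n) (X Y : VF n) (α : OneForm n) : OneForm n :=
  fun t k => - ∑ m, α t m * curvV g X Y (fun _ => Pi.single k 1) t m

/-- `g` is flat on `U`: the curvature tensor vanishes identically. -/
def FlatOn (U : Set (Pt n)) (g : Met n) : Prop :=
  ∀ X Y Z : VF n, SmoothVF U X → SmoothVF U Y → SmoothVF U Z →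
    ∀ t ∈ U, ∀ k, curvV g X Y Z t k = 0

/-- `g` has constant sectional curvature `s` on `U`. -/
def ConstSecCurv (U : Set (Pt n)) (g : Met n) (s : ℝ) : Prop :=
  ∀ X Y : VF n, SmoothVF U X → SmoothVF U Y → ∀ t ∈ U,
    mdown2 g (curvV g X Y Y) X t
      = s * (mdown2 g X X t * mdown2 g Y Y t - (mdown2 g X Y t) ^ 2)

/-- The metric g_λ of the pencil: its inverse matrix is g⁻¹ + λ g̃⁻¹. -/
def pencil (g g' : Met n) (lam : ℝ) : Met n :=
  fun t => ((g t)⁻¹ + lam • (g' t)⁻¹)⁻¹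

/-- Almost compatibility of the pair (g, g̃) on `U`. -/
def AlmostCompatible (U : Set (Pt n)) (g g' : Met n) : Prop :=
  ∀ lam : ℝ, (∀ t ∈ U, IsUnit ((g t)⁻¹ + lam • (g' t)⁻¹)) →
    ∀ X : VF n, SmoothVF U X → ∀ α : OneForm n, SmoothVF U α →
      ∀ t ∈ U, ∀ k,
        mup (pencil g g' lam) (covF (pencil g g' lam) X α) t k
          = mup g (covF g X α) t k + lam * mup g' (covF g' X α) t k

/-- Compatibility of the pair (g, g̃) on `U`. -/
def Compatible (U : Set (Pt n)) (g g' : Met n) : Prop :=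
  AlmostCompatible U g g' ∧
  ∀ lam : ℝ, (∀ t ∈ U, IsUnit ((g t)⁻¹ + lam • (g' t)⁻¹)) →
    ∀ X Y : VF n, SmoothVF U X → SmoothVF U Y →
      ∀ α : OneForm n, SmoothVF U α →
        ∀ t ∈ U, ∀ k,
          mup (pencil g g' lam) (curvF (pencil g g' lam) X Y α) t k
            = mup g (curvF g X Y α) t k + lam * mup g' (curvF g' X Y α) t k

/-- The multiplication α ∘ β = ∇^g_{g*α} β − ∇^{g̃}_{g*α} β on 1-forms. -/
def circM (g g' : Met n) (α β : OneForm n) : OneForm n :=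
  fun t k => covF g (mup g α) β t k - covF g' (mup g α) β t k

/-- The endomorphism T(u) = g(E) ∘ u of 1-forms, as a pointwise matrix
(`∘` being tensorial in its second argument). -/
def Tmat (g g' : Met n) (E : VF n) (t : Pt n) : Matrix (Fin n) (Fin n) ℝ :=
  Matrix.of fun k m => circM g g' (mdown g E) (fun _ => Pi.single m 1) t k

/-- The triple (g, g̃, E) is regular on `U` if T is invertible at every point. -/
def RegularTriple (U : Set (Pt n)) (g g' : Met n) (E : VF n) : Prop :=
  ∀ t ∈ U, IsUnit (Tmat g g' E t)

/-- T⁻¹(v). -/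
def TinvF (g g' : Met n) (E : VF n) (v : OneForm n) : OneForm n :=
  fun t k => ∑ m, (Tmat g g' E t)⁻¹ k m * v t m

/-- The multiplication u • v = u ∘ T⁻¹(v) on 1-forms. -/
def bulF (g g' : Met n) (E : VF n) (u v : OneForm n) : OneForm n :=
  circM g g' u (TinvF g g' E v)

/-- The multiplication • on vector fields: X • Y = g̃*((g̃X) • (g̃Y)). -/
def bulV (g g' : Met n) (E : VF n) (X Y : VF n) : VF n :=
  mup g' (bulF g g' E (mdown g' X) (mdown g' Y))

/-- The multiplication • associated to the regular triple (g, g̃, E), as a (1,2)-tensor. -/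
def bulMul (g g' : Met n) (E : VF n) : Mul2 n :=
  fun t k i j => bulV g g' E (fun _ => Pi.single i 1) (fun _ => Pi.single j 1) t k

/-- Applying a (1,2)-tensor to vector fields. -/
def mapp (c : Mul2 n) (X Y : VF n) : VF n :=
  fun t k => ∑ i, ∑ j, c t k i j * X t i * Y t j

/-- Transporting a multiplication on tangent vectors to a multiplication
on 1-forms via the metric: u • v := g̃((g̃*u) • (g̃*v)). -/
def formMul (g' : Met n) (c : Mul2 n) (u v : OneForm n) : OneForm n :=
  mdown g' (mapp c (mup g' u) (mup g' v))

/-- Lie derivative of a function. -/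
def lieFun (E : VF n) (φ : Pt n → ℝ) : Pt n → ℝ :=
  fun t => ∑ i, E t i * pder i φ t

/-- Lie derivative of a 1-form: (L_E α)(X) = E(α(X)) − α([E,X]). -/
def lieOne (E : VF n) (α : OneForm n) : OneForm n :=
  fun t k => (∑ i, E t i * pder i (fun s => α s k) t) + ∑ i, α t i * pder k (fun s => E s i) t

/-- Lie derivative of a metric: (L_E g)(X,Y) = E(g(X,Y)) − g([E,X],Y) − g(X,[E,Y]). -/
def lieMet (E : VF n) (g : Met n) : Met n := fun t =>
  Matrix.of fun k j =>
    (∑ i, E t i * pder i (fun s => g s k j) t)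
    + (∑ i, g t i j * pder k (fun s => E s i) t)
    + (∑ i, g t k i * pder j (fun s => E s i) t)

/-- Lie derivative of a multiplication ((1,2)-tensor):
(L_E c)(u,v) = L_E(c(u,v)) − c(L_E u, v) − c(u, L_E v), componentwise. -/
def lieMul (E : VF n) (c : Mul2 n) : Mul2 n :=
  fun t k i j =>
    vbr E (mapp c (fun _ => Pi.single i 1) (fun _ => Pi.single j 1)) t k
    - mapp c (vbr E (fun _ => Pi.single i 1)) (fun _ => Pi.single j 1) t k
    - mapp c (fun _ => Pi.single i 1) (vbr E (fun _ => Pi.single j 1)) t k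

/-- Lie derivative of a multiplication on 1-forms (applied to the pencil multiplication ∘). -/
def lieCirc (E : VF n) (g g' : Met n) (u v : OneForm n) : OneForm n :=
  fun t k => lieOne E (circM g g' u v) t k - circM g g' (lieOne E u) v t k
    - circM g g' u (lieOne E v) t k

/-- ∇^g_X(•)(Y,Z) := ∇^g_X(Y•Z) − (∇^g_X Y)•Z − Y•(∇^g_X Z), for a multiplication c. -/
def covMul (g : Met n) (c : Mul2 n) (X Y Z : VF n) : VF n :=
  fun t k => covV g X (mapp c Y Z) t k - mapp c (covV g X Y) Z t k
    - mapp c Y (covV g X Z) t k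

/-- The (4,0)-tensor ∇^g(•)(X,Y,Z,V) := g(∇^g_X(•)(Y,Z), V). -/
def covMul4 (g : Met n) (c : Mul2 n) (X Y Z V : VF n) (t : Pt n) : ℝ :=
  mdown2 g (covMul g c X Y Z) V t

/-- Total symmetry of the (4,0)-tensor ∇^g(•) (the F-manifold condition). -/
def TotSym (U : Set (Pt n)) (g : Met n) (c : Mul2 n) : Prop :=
  ∀ X Y Z V : VF n, SmoothVF U X → SmoothVF U Y → SmoothVF U Z → SmoothVF U V →
    ∀ t ∈ U,
      covMul4 g c X Y Z V t = covMul4 g c Y X Z V t ∧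
      covMul4 g c X Y Z V t = covMul4 g c X Z Y V t ∧
      covMul4 g c X Y Z V t = covMul4 g c X Y V Z t

/-- Weak F-manifold structure (U, •, g̃, E), with identity `e`, •-inverse `Einv` of E,
and rescaling functions `Dt` (for the metric) and `k` (for the multiplication). -/
structure IsWeakF (U : Set (Pt n)) (c : Mul2 n) (g' : Met n) (E e Einv : VF n)
    (Dt k : Pt n → ℝ) : Prop where
  met : IsMetricOn U g'
  smooth_c : SmoothMul2 U c
  smooth_E : SmoothVF U E
  smooth_e : SmoothVF U e
  smooth_Einv : SmoothVF U Einv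
  smooth_Dt : ContDiffOn ℝ (⊤ : ℕ∞) Dt U
  smooth_k : ContDiffOn ℝ (⊤ : ℕ∞) k U
  comm : ∀ t ∈ U, ∀ a i j, c t a i j = c t a j i
  assoc : ∀ t ∈ U, ∀ a x y z, (∑ m, c t a m z * c t m x y) = ∑ m, c t a x m * c t m y z
  unit : ∀ t ∈ U, ∀ a i, (∑ j, c t a j i * e t j) = if a = i then (1 : ℝ) else 0
  invar : ∀ t ∈ U, ∀ x y z, (∑ m, g' t m z * c t m x y) = ∑ m, g' t x m * c t m y z
  lie_g : ∀ t ∈ U, ∀ i j, lieMet E g' t i j = Dt t * g' t i j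
  lie_c : ∀ t ∈ U, ∀ a i j, lieMul E c t a i j = k t * c t a i j
  e_inv : ∀ t ∈ U, ∀ a, (∑ i, ∑ j, c t a i j * E t i * Einv t j) = e t a
  sym_E : ∀ Y Z V : VF n, SmoothVF U Y → SmoothVF U Z → SmoothVF U V → ∀ t ∈ U,
    covMul4 g' c E Y Z V t = covMul4 g' c Y E Z V t

/-- Weak quasi-homogeneous pencil (h, h̃) with Euler vector field E. -/
structure IsWQH (U : Set (Pt n)) (h h' : Met n) (E : VF n) (D Dt : Pt n → ℝ) : Prop where
  met_h : IsMetricOn U h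
  met_h' : IsMetricOn U h'
  compat : Compatible U h h'
  smooth_E : SmoothVF U E
  smooth_D : ContDiffOn ℝ (⊤ : ℕ∞) D U
  smooth_Dt : ContDiffOn ℝ (⊤ : ℕ∞) Dt U
  lie_h' : ∀ t ∈ U, ∀ i j, lieMet E h' t i j = Dt t * h' t i j
  cov_E : ∀ X : VF n, SmoothVF U X → ∀ t ∈ U, ∀ a, covV h X E t a = (D t / 2) * X t a
  diff_const : ∃ c₀ : ℝ, ∀ t ∈ U, Dt t - D t = c₀

/-- Frobenius manifold structure (U, •, g̃, E). -/
structure IsFrob (U : Set (Pt n)) (c : Mul2 n) (g' : Met n) (E e : VF n) (D k : ℝ) : Prop where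
  met : IsMetricOn U g'
  flat : FlatOn U g'
  smooth_c : SmoothMul2 U c
  smooth_E : SmoothVF U E
  smooth_e : SmoothVF U e
  comm : ∀ t ∈ U, ∀ a i j, c t a i j = c t a j i
  assoc : ∀ t ∈ U, ∀ a x y z, (∑ m, c t a m z * c t m x y) = ∑ m, c t a x m * c t m y z
  unit : ∀ t ∈ U, ∀ a i, (∑ j, c t a j i * e t j) = if a = i then (1 : ℝ) else 0
  invar : ∀ t ∈ U, ∀ x y z, (∑ m, g' t m z * c t m x y) = ∑ m, g' t x m * c t m y z
  e_par : ∀ X : VF n, SmoothVF U X → ∀ t ∈ U, ∀ a, covV g' X e t a = 0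
  tot_sym : TotSym U g' c
  nabla2E : ∀ X Y : VF n, SmoothVF U X → SmoothVF U Y → ∀ t ∈ U, ∀ a,
    covV g' X (covV g' Y E) t a - covV g' (covV g' X Y) E t a = 0
  lie_g : ∀ t ∈ U, ∀ i j, lieMet E g' t i j = D * g' t i j
  lie_c : ∀ t ∈ U, ∀ a i j, lieMul E c t a i j = k * c t a i j

/-- The intersection metric `g` of a Frobenius manifold: g*g̃ = E•, together with
its standard properties. -/
structure IsIntersection (U : Set (Pt n)) (c : Mul2 n) (g g' : Met n) (E : VF n)
    (d : ℝ) : Prop where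
  met : IsMetricOn U g
  defn : ∀ t ∈ U, ∀ a j, (∑ l, (g t)⁻¹ a l * g' t l j) = ∑ i, c t a i j * E t i
  lie_g : ∀ t ∈ U, ∀ i j, lieMet E g t i j = (1 - d) * g t i j
  compat : Compatible U g g'
  regular : RegularTriple U g g' E
  mul_eq : ∀ t ∈ U, ∀ a i j, bulMul g g' E t a i j = c t a i j

/-!
Since `∇` is metric and torsion-free, `L_E g = φ g` says
`g(∇_X E, Z) + g(X, ∇_Z E) = φ g(X, Z)`. Differentiating this along `Y` shows that
`T(Y, X, Z) := g(∇²_{Y,X} E, Z)` satisfies `T(Y, X, Z) + T(Y, Z, X) = Y(φ) g(X, Z)`, and the Ricci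
identity gives `T(X, Y, Z) - T(Y, X, Z) = g(R_{X,Y} E, Z)`. As for the Koszul formula, a tensor
whose symmetrization in the last two arguments and antisymmetrization in the first two arguments are
known is determined; the symmetries of the curvature then collapse the three curvature terms into
`2 g(R_{Y,E} X, Z)`.
-/

section LeviCivita

open VectorField Matrix Topology
open scoped ContDiff

section SmoothMatrix

variable {𝕜 F m : Type*} [NontriviallyNormedField 𝕜] [NormedAddCommGroup F] [NormedSpace 𝕜 F]
  [Fintype m] [DecidableEq m] {A : F → Matrix m m 𝕜} {s : Set F} {r : WithTop ℕ∞}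

lemma contDiffOn_matrix_det (hA : ∀ i j, ContDiffOn 𝕜 r (fun x => A x i j) s) :
    ContDiffOn 𝕜 r (fun x => (A x).det) s := by
  simp only [det_apply']
  exact ContDiffOn.sum fun σ _ => contDiffOn_const.mul (contDiffOn_prod fun i _ => hA _ _)

lemma contDiffOn_matrix_adjugate_apply (hA : ∀ i j, ContDiffOn 𝕜 r (fun x => A x i j) s)
    (i j : m) : ContDiffOn 𝕜 r (fun x => (A x).adjugate i j) s := by
  simp only [adjugate_apply]
  refine contDiffOn_matrix_det fun k l => ?_
  by_cases hk : k = j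
  · subst hk
    simpa only [updateRow_self] using contDiffOn_const
  · simpa only [updateRow_ne hk] using hA k l

lemma contDiffOn_matrix_inv_apply (hA : ∀ i j, ContDiffOn 𝕜 r (fun x => A x i j) s)
    (hu : ∀ x ∈ s, IsUnit (A x)) (i j : m) : ContDiffOn 𝕜 r (fun x => (A x)⁻¹ i j) s := by
  simp only [inv_def, Matrix.smul_apply, Ring.inverse_eq_inv', smul_eq_mul]
  exact ((contDiffOn_matrix_det hA).inv fun x hx =>
    ((isUnit_iff_isUnit_det _).1 (hu x hx)).ne_zero).mul (contDiffOn_matrix_adjugate_apply hA i j)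

end SmoothMatrix

section DirectionalDerivative

variable {U : Set (Pt n)} {X Y Z : VF n} {f f₁ f₂ : Pt n → ℝ} {t : Pt n}

lemma lieFun_eq_fderiv (X : VF n) (f : Pt n → ℝ) (t : Pt n) :
    lieFun X f t = fderiv ℝ f t (X t) := by
  conv_rhs => rw [pi_eq_sum_univ' (X t)]
  simp [lieFun, pder]

lemma lieFun_single (i : Fin n) (f : Pt n → ℝ) (t : Pt n) :
    lieFun (fun _ => Pi.single i 1) f t = pder i f t :=
  lieFun_eq_fderiv _ f t

lemma lieFun_congr (hU : IsOpen U) (h : Set.EqOn f₁ f₂ U) (ht : t ∈ U) :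
    lieFun X f₁ t = lieFun X f₂ t := by
  rw [lieFun_eq_fderiv, lieFun_eq_fderiv, (h.eventuallyEq_of_mem (hU.mem_nhds ht)).fderiv_eq]

lemma differentiableAt_of_contDiffOn {G : Type*} [NormedAddCommGroup G] [NormedSpace ℝ G]
    {F : Pt n → G} (hU : IsOpen U) (hF : ContDiffOn ℝ ∞ F U) (ht : t ∈ U) :
    DifferentiableAt ℝ F t :=
  (hF.contDiffAt (hU.mem_nhds ht)).differentiableAt (by simp)

lemma lieFun_add (h₁ : DifferentiableAt ℝ f₁ t) (h₂ : DifferentiableAt ℝ f₂ t) :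
    lieFun X (fun s => f₁ s + f₂ s) t = lieFun X f₁ t + lieFun X f₂ t := by
  simp only [lieFun_eq_fderiv, fderiv_fun_add h₁ h₂, _root_.add_apply]

lemma lieFun_mul (h₁ : DifferentiableAt ℝ f₁ t) (h₂ : DifferentiableAt ℝ f₂ t) :
    lieFun X (fun s => f₁ s * f₂ s) t = lieFun X f₁ t * f₂ t + f₁ t * lieFun X f₂ t := by
  simp only [lieFun_eq_fderiv, fderiv_fun_mul h₁ h₂, _root_.add_apply,
    _root_.smul_apply, smul_eq_mul]
  ring

lemma lieFun_sum {ι : Type*} [Fintype ι] {F : ι → Pt n → ℝ}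
    (h : ∀ a, DifferentiableAt ℝ (F a) t) :
    lieFun X (fun s => ∑ a, F a s) t = ∑ a, lieFun X (F a) t := by
  simp only [lieFun_eq_fderiv, fderiv_fun_sum fun a _ => h a, _root_.sum_apply]

lemma contDiffOn_pder (hU : IsOpen U) (hf : ContDiffOn ℝ ∞ f U) (i : Fin n) :
    ContDiffOn ℝ ∞ (pder i f) U :=
  (hf.fderiv_of_isOpen hU (by norm_cast)).clm_apply contDiffOn_const

/-- Jacobian matrix of a vector field: `jacMat Y t *ᵥ X t` is the coordinate derivative of `Y`
along `X`. -/
def jacMat (Y : VF n) (t : Pt n) : Matrix (Fin n) (Fin n) ℝ :=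
  of fun k i => pder i (fun s => Y s k) t

lemma jacMat_mulVec (X Y : VF n) (t : Pt n) :
    jacMat Y t *ᵥ X t = fun k => lieFun X (fun s => Y s k) t :=
  funext fun _ => dotProduct_comm _ _

lemma jacMat_mulVec_eq_fderiv (hY : DifferentiableAt ℝ Y t) :
    jacMat Y t *ᵥ X t = fderiv ℝ Y t (X t) := by
  ext k
  rw [jacMat_mulVec]
  simp only [lieFun_eq_fderiv, fderiv_apply hY, ContinuousLinearMap.comp_apply,
    ContinuousLinearMap.proj_apply]

lemma vbr_eq_jacMat (X Y : VF n) (t : Pt n) :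
    vbr X Y t = jacMat Y t *ᵥ X t - jacMat X t *ᵥ Y t := by
  ext k
  simp only [jacMat_mulVec, vbr, lieFun, Finset.sum_sub_distrib, Pi.sub_apply]

lemma vbr_eq_lieBracket (hX : DifferentiableAt ℝ X t) (hY : DifferentiableAt ℝ Y t) :
    vbr X Y t = lieBracket ℝ X Y t := by
  rw [vbr_eq_jacMat, jacMat_mulVec_eq_fderiv hX, jacMat_mulVec_eq_fderiv hY, lieBracket]

protected lemma SmoothVF.contDiffOn (hX : SmoothVF U X) : ContDiffOn ℝ ∞ X U :=
  contDiffOn_pi.2 hX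

protected lemma SmoothVF.differentiableAt (hX : SmoothVF U X) (hU : IsOpen U) (ht : t ∈ U) :
    DifferentiableAt ℝ X t :=
  differentiableAt_of_contDiffOn hU hX.contDiffOn ht

lemma smoothVF_const (v : Fin n → ℝ) : SmoothVF U fun _ => v :=
  fun _ => contDiffOn_const

protected lemma SmoothVF.vbr (hU : IsOpen U) (hX : SmoothVF U X) (hY : SmoothVF U Y) :
    SmoothVF U (vbr X Y) := fun k =>
  ContDiffOn.sum fun i _ => ((hX i).mul (contDiffOn_pder hU (hY k) i)).sub
    ((hY i).mul (contDiffOn_pder hU (hX k) i))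

lemma lieFun_vbr (hU : IsOpen U) (hX : SmoothVF U X) (hY : SmoothVF U Y)
    (hf : ContDiffOn ℝ ∞ f U) (ht : t ∈ U) :
    lieFun (vbr X Y) f t = lieFun X (lieFun Y f) t - lieFun Y (lieFun X f) t := by
  have hX' := hX.differentiableAt hU ht
  have hY' := hY.differentiableAt hU ht
  simp only [funext (lieFun_eq_fderiv X f), funext (lieFun_eq_fderiv Y f), lieFun_eq_fderiv,
    vbr_eq_lieBracket hX' hY']
  have hsmooth : minSmoothness ℝ 2 ≤ ∞ := by
    rw [minSmoothness_of_isRCLikeNormedField]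
    norm_cast
  exact fderiv_apply_lieBracket (hf.contDiffAt (hU.mem_nhds ht)) hsmooth hY' hX'

lemma vbr_jacobi (hU : IsOpen U) (hX : SmoothVF U X) (hY : SmoothVF U Y) (hZ : SmoothVF U Z)
    (ht : t ∈ U) :
    vbr X (vbr Y Z) t + vbr Y (vbr Z X) t + vbr Z (vbr X Y) t = 0 := by
  have nested : ∀ {A B C : VF n}, SmoothVF U A → SmoothVF U B → SmoothVF U C →
      vbr A (vbr B C) t = lieBracket ℝ A (lieBracket ℝ B C) t := fun hA hB hC => by
    rw [vbr_eq_lieBracket (hA.differentiableAt hU ht) ((hB.vbr hU hC).differentiableAt hU ht)]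
    refine Filter.EventuallyEq.lieBracket_vectorField_eq .rfl ?_
    filter_upwards [hU.mem_nhds ht] with s hs
    exact vbr_eq_lieBracket (hB.differentiableAt hU hs) (hC.differentiableAt hU hs)
  have hd : ∀ {A : VF n}, SmoothVF U A → ContDiffAt ℝ ∞ A t := fun hA =>
    hA.contDiffOn.contDiffAt (hU.mem_nhds ht)
  have hsmooth : minSmoothness ℝ 2 ≤ ∞ := by
    rw [minSmoothness_of_isRCLikeNormedField]
    norm_cast
  have hswap : lieBracket ℝ Y (lieBracket ℝ Z X) t = -lieBracket ℝ Y (lieBracket ℝ X Z) t := by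
    rw [show lieBracket ℝ Z X = -lieBracket ℝ X Z from funext fun _ => lieBracket_swap]
    simp [lieBracket, fderiv_neg, add_comm, sub_eq_add_neg]
  rw [nested hX hY hZ, nested hY hZ hX, nested hZ hX hY, hswap, lieBracket_swap (V := Z),
    leibniz_identity_lieBracket hsmooth (hd hX) (hd hY) (hd hZ)]
  abel

end DirectionalDerivative

section Metric

variable {U : Set (Pt n)} {g : Met n} {E X Y : VF n} {t : Pt n}

lemma mdown2_eq_dotProduct (g : Met n) (X Y : VF n) (t : Pt n) :
    mdown2 g X Y t = X t ⬝ᵥ g t *ᵥ Y t := by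
  simp only [mdown2, dotProduct, mulVec, Finset.mul_sum]
  exact Finset.sum_congr rfl fun i _ => Finset.sum_congr rfl fun j _ => by ring

lemma mdown2_comm (hs : (g t).IsSymm) (X Y : VF n) : mdown2 g X Y t = mdown2 g Y X t := by
  rw [mdown2_eq_dotProduct, mdown2_eq_dotProduct, ← dotProduct_transpose_mulVec, hs.eq,
    dotProduct_comm]

lemma mdown_eq_mdown2_single (hs : (g t).IsSymm) (X : VF n) (a : Fin n) :
    mdown g X t a = mdown2 g X (fun _ => Pi.single a 1) t := by
  rw [mdown2_comm hs, mdown2_eq_dotProduct, single_one_dotProduct]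
  rfl

lemma SmoothMet.contDiffOn_mdown2 (hg : SmoothMet U g) (hX : SmoothVF U X) (hY : SmoothVF U Y) :
    ContDiffOn ℝ ∞ (mdown2 g X Y) U :=
  ContDiffOn.sum fun i _ => ContDiffOn.sum fun j _ => ((hg i j).mul (hX i)).mul (hY j)

lemma SmoothMet.differentiableAt_mdown2 (hg : SmoothMet U g) (hU : IsOpen U)
    (hX : SmoothVF U X) (hY : SmoothVF U Y) (ht : t ∈ U) :
    DifferentiableAt ℝ (mdown2 g X Y) t :=
  differentiableAt_of_contDiffOn hU (hg.contDiffOn_mdown2 hX hY) ht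

/-- Entrywise derivative `E(g_{ij})` of a metric along a vector field: the part of `E(g(X, Y))` in
which neither `X` nor `Y` is differentiated. -/
def derivMet (E : VF n) (g : Met n) (t : Pt n) : Matrix (Fin n) (Fin n) ℝ :=
  of fun i j => lieFun E (fun s => g s i j) t

lemma lieFun_mdown2_eq_derivMet_add (hg : ∀ i j, DifferentiableAt ℝ (fun s => g s i j) t)
    (hX : DifferentiableAt ℝ X t) (hY : DifferentiableAt ℝ Y t) :
    lieFun E (mdown2 g X Y) t = X t ⬝ᵥ derivMet E g t *ᵥ Y t
      + (jacMat X t *ᵥ E t) ⬝ᵥ g t *ᵥ Y t + X t ⬝ᵥ g t *ᵥ jacMat Y t *ᵥ E t := by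
  have hX' := differentiableAt_pi.1 hX
  have hY' := differentiableAt_pi.1 hY
  have hgX := fun i j => (hg i j).fun_mul (hX' i)
  have hgXY := fun i j => (hgX i j).fun_mul (hY' j)
  rw [jacMat_mulVec, jacMat_mulVec]
  unfold mdown2
  rw [lieFun_sum fun i => DifferentiableAt.fun_sum fun j _ => hgXY i j]
  simp only [lieFun_sum (hgXY _), lieFun_mul (hgX _ _) (hY' _), lieFun_mul (hg _ _) (hX' _),
    derivMet, dotProduct, mulVec, of_apply, Finset.mul_sum,
    ← Finset.sum_add_distrib]
  exact Finset.sum_congr rfl fun i _ => Finset.sum_congr rfl fun j _ => by ring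

lemma lieMet_eq_derivMet_add (E : VF n) (g : Met n) (t : Pt n) :
    lieMet E g t = derivMet E g t + (jacMat E t)ᵀ * g t + g t * jacMat E t := by
  ext i j
  simp only [lieMet, derivMet, jacMat, lieFun, Matrix.add_apply, mul_apply, transpose_apply,
    of_apply, mul_comm (g t _ j)]

end Metric

section CovariantDerivative

variable {U : Set (Pt n)} {g : Met n} {X Y Z : VF n} {t : Pt n}

lemma pder_metric_symm (hs : ∀ᶠ s in 𝓝 t, (g s).IsSymm) (l i j : Fin n) :
    pder l (fun s => g s i j) t = pder l (fun s => g s j i) t := by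
  rw [pder, Filter.EventuallyEq.fderiv_eq (hs.mono fun s hs => hs.apply j i), pder]

lemma chr_symm (hs : ∀ᶠ s in 𝓝 t, (g s).IsSymm) (k i j : Fin n) :
    chr g k i j t = chr g k j i t := by
  simp only [chr, pder_metric_symm hs _ i j, add_comm (pder i _ t)]

lemma sum_mul_chr (hu : IsUnit (g t)) (a i j : Fin n) :
    ∑ k, g t a k * chr g k i j t = (1/2) * (pder i (fun s => g s j a) t
      + pder j (fun s => g s i a) t - pder a (fun s => g s i j) t) := by
  set v : Fin n → ℝ := fun l => pder i (fun s => g s j l) t + pder j (fun s => g s i l) t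
    - pder l (fun s => g s i j) t
  have hchr : (fun k => chr g k i j t) = (1/2 : ℝ) • (g t)⁻¹ *ᵥ v := rfl
  have hlow : g t *ᵥ (fun k => chr g k i j t) = (1/2 : ℝ) • v := by
    rw [hchr, mulVec_smul, mulVec_mulVec,
      mul_nonsing_inv _ ((isUnit_iff_isUnit_det _).1 hu), one_mulVec]
  exact congr_fun hlow a

lemma pder_eq_sum_chr (hs : ∀ᶠ s in 𝓝 t, (g s).IsSymm) (hu : IsUnit (g t)) (l i j : Fin n) :
    pder l (fun s => g s i j) t
      = ∑ k, g t j k * chr g k l i t + ∑ k, g t i k * chr g k l j t := by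
  rw [sum_mul_chr hu, sum_mul_chr hu, pder_metric_symm hs l j i, pder_metric_symm hs i l j,
    pder_metric_symm hs j l i]
  ring

/-- The matrix `X^i Γ^k_{im}` of the connection form evaluated on `X`, which is the zeroth-order
part of the operator `∇_X` on vector fields. -/
def connMat (g : Met n) (X : VF n) (t : Pt n) : Matrix (Fin n) (Fin n) ℝ :=
  of fun k m => ∑ i, X t i * chr g k i m t

/-- The matrix of the endomorphism `∇E : X ↦ ∇_X E`, which makes `∇_X E` manifestly tensorial in
`X`. -/
def covMat (g : Met n) (E : VF n) (t : Pt n) : Matrix (Fin n) (Fin n) ℝ :=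
  of fun k i => pder i (fun s => E s k) t + ∑ m, chr g k i m t * E t m

lemma covV_eq_covMat_mulVec (g : Met n) (X E : VF n) (t : Pt n) :
    covV g X E t = covMat g E t *ᵥ X t :=
  funext fun _ => dotProduct_comm _ _

lemma covV_eq_jacMat_add_connMat (g : Met n) (X Y : VF n) (t : Pt n) :
    covV g X Y t = jacMat Y t *ᵥ X t + connMat g X t *ᵥ Y t := by
  ext k
  simp only [covV, jacMat, connMat, mulVec, dotProduct, of_apply, Pi.add_apply, mul_add,
    Finset.sum_add_distrib, Finset.mul_sum, Finset.sum_mul]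
  congr 1
  · exact Finset.sum_congr rfl fun i _ => mul_comm _ _
  · rw [Finset.sum_comm]
    simp only [mul_assoc]

lemma covMat_eq_jacMat_add_connMat (hs : ∀ᶠ s in 𝓝 t, (g s).IsSymm) (E : VF n) :
    covMat g E t = jacMat E t + connMat g E t := by
  ext k i
  simp only [covMat, jacMat, connMat, of_apply, Matrix.add_apply, chr_symm hs k i, mul_comm]

lemma covV_sub_covV (hs : ∀ᶠ s in 𝓝 t, (g s).IsSymm) (X Y : VF n) :
    covV g X Y t - covV g Y X t = vbr X Y t := by
  rw [covV_eq_covMat_mulVec, covMat_eq_jacMat_add_connMat hs, covV_eq_jacMat_add_connMat,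
    vbr_eq_jacMat, add_mulVec]
  abel

lemma covV_sub_right (hY : DifferentiableAt ℝ Y t) (hZ : DifferentiableAt ℝ Z t) :
    covV g X (Y - Z) t = covV g X Y t - covV g X Z t := by
  simp only [covV_eq_jacMat_add_connMat, jacMat_mulVec_eq_fderiv hY, jacMat_mulVec_eq_fderiv hZ,
    jacMat_mulVec_eq_fderiv (hY.sub hZ), fderiv_sub hY hZ, Pi.sub_apply, _root_.sub_apply,
    mulVec_sub]
  abel

lemma covV_congr (hU : IsOpen U) (h : Set.EqOn Y Z U) (ht : t ∈ U) :
    covV g X Y t = covV g X Z t := by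
  rw [covV_eq_jacMat_add_connMat, covV_eq_jacMat_add_connMat, jacMat_mulVec, jacMat_mulVec, h ht]
  congr 1
  exact funext fun k => lieFun_congr hU (fun s hs => congr_fun (h hs) k) ht

lemma derivMet_eq_connMat (hs : ∀ᶠ s in 𝓝 t, (g s).IsSymm) (hu : IsUnit (g t)) (X : VF n) :
    derivMet X g t = (connMat g X t)ᵀ * g t + g t * connMat g X t := by
  ext i j
  simp only [derivMet, lieFun, pder_eq_sum_chr hs hu, connMat, Matrix.add_apply, mul_apply,
    transpose_apply, of_apply, mul_add, Finset.sum_add_distrib, Finset.mul_sum, Finset.sum_mul]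
  congr 1 <;> rw [Finset.sum_comm] <;>
    refine Finset.sum_congr rfl fun k _ => Finset.sum_congr rfl fun l _ => ?_
  · rw [hs.self_of_nhds.apply k j]
    ring
  · ring

end CovariantDerivative

section MetricCompatibility

variable {U : Set (Pt n)} {g : Met n} {X Y Z : VF n} {t : Pt n}

lemma IsMetricOn.eventually_isSymm (hU : IsOpen U) (hg : IsMetricOn U g) (ht : t ∈ U) :
    ∀ᶠ s in 𝓝 t, (g s).IsSymm := by
  filter_upwards [hU.mem_nhds ht] with s hs using (hg.2 s hs).1

lemma contDiffOn_chr (hU : IsOpen U) (hg : IsMetricOn U g) (k i j : Fin n) :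
    ContDiffOn ℝ ∞ (chr g k i j) U := by
  have hd : ∀ a b c, ContDiffOn ℝ ∞ (pder a fun s => g s b c) U := fun a b c =>
    contDiffOn_pder hU (hg.1 b c) a
  exact contDiffOn_const.mul <| ContDiffOn.sum fun l _ =>
    (contDiffOn_matrix_inv_apply hg.1 (fun s hs => (hg.2 s hs).2) k l).mul
      (((hd i j l).add (hd j i l)).sub (hd l i j))

protected lemma SmoothVF.covV (hU : IsOpen U) (hg : IsMetricOn U g) (hX : SmoothVF U X)
    (hY : SmoothVF U Y) : SmoothVF U (covV g X Y) := fun k =>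
  ContDiffOn.sum fun i _ => (hX i).mul <| (contDiffOn_pder hU (hY k) i).add <|
    ContDiffOn.sum fun m _ => (contDiffOn_chr hU hg k i m).mul (hY m)

lemma lieFun_mdown2_eq_covV (hU : IsOpen U) (hg : IsMetricOn U g) (hY : SmoothVF U Y)
    (hZ : SmoothVF U Z) (ht : t ∈ U) (X : VF n) :
    lieFun X (mdown2 g Y Z) t = mdown2 g (covV g X Y) Z t + mdown2 g Y (covV g X Z) t := by
  have hdg : ∀ i j, DifferentiableAt ℝ (fun s => g s i j) t := fun i j =>
    differentiableAt_of_contDiffOn hU (hg.1 i j) ht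
  rw [lieFun_mdown2_eq_derivMet_add hdg (hY.differentiableAt hU ht) (hZ.differentiableAt hU ht),
    derivMet_eq_connMat (hg.eventually_isSymm hU ht) (hg.2 t ht).2]
  simp only [mdown2_eq_dotProduct, covV_eq_jacMat_add_connMat, add_mulVec, mulVec_add,
    dotProduct_add, add_dotProduct, ← mulVec_mulVec, dotProduct_transpose_mulVec,
    dotProduct_comm (g t *ᵥ Z t)]
  ring

end MetricCompatibility

section Curvature

variable {U : Set (Pt n)} {g : Met n} {X Y Z W : VF n} {t : Pt n}

/-- The second covariant derivative `∇²_{Y,X} E = (∇_Y (∇E))(X)`; the differentiating direction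
`Y` comes first. -/
def secondCovV (g : Met n) (Y X E : VF n) : VF n :=
  covV g Y (covV g X E) - covV g (covV g Y X) E

lemma mdown2_secondCovV (g : Met n) (Y X E Z : VF n) (t : Pt n) :
    mdown2 g (secondCovV g Y X E) Z t
      = mdown2 g (covV g Y (covV g X E)) Z t - mdown2 g (covV g (covV g Y X) E) Z t := by
  simp only [mdown2_eq_dotProduct, ← sub_dotProduct]
  rfl

lemma secondCovV_sub_swap (hs : ∀ᶠ s in 𝓝 t, (g s).IsSymm) (X Y E : VF n) :
    secondCovV g X Y E t - secondCovV g Y X E t = curvV g X Y E t := by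
  have htorsion : covV g (vbr X Y) E t = covV g (covV g X Y) E t - covV g (covV g Y X) E t := by
    simp only [covV_eq_covMat_mulVec g _ E, ← mulVec_sub, covV_sub_covV hs]
  change _ = covV g X (covV g Y E) t - covV g Y (covV g X E) t - covV g (vbr X Y) E t
  rw [htorsion, secondCovV, secondCovV, Pi.sub_apply, Pi.sub_apply]
  abel

lemma curvV_swap (hs : ∀ᶠ s in 𝓝 t, (g s).IsSymm) (X Y Z : VF n) :
    curvV g Y X Z t = -curvV g X Y Z t := by
  rw [← secondCovV_sub_swap hs, ← secondCovV_sub_swap hs, neg_sub]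

lemma covV_vbr (hU : IsOpen U) (hg : IsMetricOn U g) (hY : SmoothVF U Y) (hZ : SmoothVF U Z)
    (ht : t ∈ U) (X : VF n) :
    covV g X (vbr Y Z) t = covV g X (covV g Y Z) t - covV g X (covV g Z Y) t := by
  rw [← covV_sub_right ((hY.covV hU hg hZ).differentiableAt hU ht)
    ((hZ.covV hU hg hY).differentiableAt hU ht)]
  exact covV_congr hU (fun s hs => (covV_sub_covV (hg.eventually_isSymm hU hs) Y Z).symm) ht

lemma curvV_bianchi (hU : IsOpen U) (hg : IsMetricOn U g) (hX : SmoothVF U X)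
    (hY : SmoothVF U Y) (hZ : SmoothVF U Z) (ht : t ∈ U) :
    curvV g X Y Z t + curvV g Y Z X t + curvV g Z X Y t = 0 := by
  have expand : ∀ {A B C : VF n}, SmoothVF U B → SmoothVF U C →
      covV g A (covV g B C) t - covV g A (covV g C B) t - covV g (vbr B C) A t
        = vbr A (vbr B C) t := fun hB hC => by
    rw [← covV_vbr hU hg hB hC ht, covV_sub_covV (hg.eventually_isSymm hU ht)]
  calc curvV g X Y Z t + curvV g Y Z X t + curvV g Z X Y t
      = (covV g X (covV g Y Z) t - covV g X (covV g Z Y) t - covV g (vbr Y Z) X t)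
        + (covV g Y (covV g Z X) t - covV g Y (covV g X Z) t - covV g (vbr Z X) Y t)
        + (covV g Z (covV g X Y) t - covV g Z (covV g Y X) t - covV g (vbr X Y) Z t) := by
        ext k
        simp only [curvV, Pi.add_apply, Pi.sub_apply]
        ring
    _ = 0 := by rw [expand hY hZ, expand hZ hX, expand hX hY, vbr_jacobi hU hX hY hZ ht]

lemma mdown2_curvV (g : Met n) (X Y Z W : VF n) (t : Pt n) :
    mdown2 g (curvV g X Y Z) W t = mdown2 g (covV g X (covV g Y Z)) W t
      - mdown2 g (covV g Y (covV g X Z)) W t - mdown2 g (covV g (vbr X Y) Z) W t := by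
  simp only [mdown2_eq_dotProduct, ← sub_dotProduct]
  rfl

lemma lieFun_lieFun_mdown2 (hU : IsOpen U) (hg : IsMetricOn U g) (hY : SmoothVF U Y)
    (hZ : SmoothVF U Z) (hW : SmoothVF U W) (ht : t ∈ U) (X : VF n) :
    lieFun X (lieFun Y (mdown2 g Z W)) t
      = mdown2 g (covV g X (covV g Y Z)) W t + mdown2 g (covV g Y Z) (covV g X W) t
        + (mdown2 g (covV g X Z) (covV g Y W) t + mdown2 g Z (covV g X (covV g Y W)) t) := by
  have hYZ := hY.covV hU hg hZ
  have hYW := hY.covV hU hg hW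
  rw [lieFun_congr hU (fun s hs => lieFun_mdown2_eq_covV hU hg hZ hW hs Y) ht,
    lieFun_add (hg.1.differentiableAt_mdown2 hU hYZ hW ht)
      (hg.1.differentiableAt_mdown2 hU hZ hYW ht),
    lieFun_mdown2_eq_covV hU hg hYZ hW ht, lieFun_mdown2_eq_covV hU hg hZ hYW ht]

lemma mdown2_curvV_skew (hU : IsOpen U) (hg : IsMetricOn U g) (hX : SmoothVF U X)
    (hY : SmoothVF U Y) (hZ : SmoothVF U Z) (hW : SmoothVF U W) (ht : t ∈ U) :
    mdown2 g (curvV g X Y Z) W t = -mdown2 g (curvV g X Y W) Z t := by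
  have hcomm := lieFun_vbr hU hX hY (hg.1.contDiffOn_mdown2 hZ hW) ht
  rw [lieFun_mdown2_eq_covV hU hg hZ hW ht, lieFun_lieFun_mdown2 hU hg hY hZ hW ht,
    lieFun_lieFun_mdown2 hU hg hX hZ hW ht] at hcomm
  simp only [mdown2_comm (hg.2 t ht).1 Z] at hcomm
  rw [mdown2_curvV, mdown2_curvV]
  linarith

lemma mdown2_curvV_swap (hs : ∀ᶠ s in 𝓝 t, (g s).IsSymm) (X Y Z W : VF n) :
    mdown2 g (curvV g Y X Z) W t = -mdown2 g (curvV g X Y Z) W t := by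
  rw [mdown2_eq_dotProduct, curvV_swap hs, neg_dotProduct, mdown2_eq_dotProduct]

lemma mdown2_curvV_bianchi (hU : IsOpen U) (hg : IsMetricOn U g) (hX : SmoothVF U X)
    (hY : SmoothVF U Y) (hZ : SmoothVF U Z) (ht : t ∈ U) (W : VF n) :
    mdown2 g (curvV g X Y Z) W t + mdown2 g (curvV g Y Z X) W t
      + mdown2 g (curvV g Z X Y) W t = 0 := by
  simp only [mdown2_eq_dotProduct, ← add_dotProduct]
  rw [curvV_bianchi hU hg hX hY hZ ht, zero_dotProduct]

lemma mdown2_curvV_pair_symm (hU : IsOpen U) (hg : IsMetricOn U g) (hX : SmoothVF U X)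
    (hY : SmoothVF U Y) (hZ : SmoothVF U Z) (hW : SmoothVF U W) (ht : t ∈ U) :
    mdown2 g (curvV g X Y Z) W t = mdown2 g (curvV g Z W X) Y t := by
  have bianchi {A B C : VF n} (hA : SmoothVF U A) (hB : SmoothVF U B) (hC : SmoothVF U C) :=
    mdown2_curvV_bianchi hU hg hA hB hC ht
  have skew {A B C D : VF n} (hA : SmoothVF U A) (hB : SmoothVF U B) (hC : SmoothVF U C)
      (hD : SmoothVF U D) := mdown2_curvV_skew hU hg hA hB hC hD ht
  have swap := mdown2_curvV_swap (hg.eventually_isSymm hU ht)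
  -- In the sum of the four Bianchi identities the skew pairs cancel, except for
  -- `2 (R(X, Y, Z, W) + R(W, Z, X, Y))`, where `R(A, B, C, D) = g(R_{A,B} C, D)`.
  linarith [bianchi hY hZ hX W, bianchi hZ hX hW Y, bianchi hX hW hY Z, bianchi hW hY hZ X,
    skew hY hZ hX hW, skew hZ hX hY hW, skew hX hW hZ hY, skew hW hY hX hZ, skew hY hX hZ hW,
    skew hZ hW hX hY, swap Y X Z W, swap Z W X Y]

end Curvature

section ConformalField

variable {U : Set (Pt n)} {g : Met n} {E X Y Z : VF n} {φ : Pt n → ℝ} {t : Pt n}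

lemma lieMet_eq_covMat (hs : ∀ᶠ s in 𝓝 t, (g s).IsSymm) (hu : IsUnit (g t)) (E : VF n) :
    lieMet E g t = (covMat g E t)ᵀ * g t + g t * covMat g E t := by
  rw [lieMet_eq_derivMet_add, derivMet_eq_connMat hs hu,
    covMat_eq_jacMat_add_connMat hs, transpose_add, add_mul, mul_add]
  abel

lemma mdown2_covV_add_of_lieMet (hs : ∀ᶠ s in 𝓝 t, (g s).IsSymm) (hu : IsUnit (g t))
    (hE : lieMet E g t = φ t • g t) (X Z : VF n) :
    mdown2 g (covV g X E) Z t + mdown2 g X (covV g Z E) t = φ t * mdown2 g X Z t := by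
  have h : X t ⬝ᵥ lieMet E g t *ᵥ Z t = X t ⬝ᵥ (φ t • g t) *ᵥ Z t := by rw [hE]
  rw [lieMet_eq_covMat hs hu] at h
  simpa only [mdown2_eq_dotProduct, covV_eq_covMat_mulVec, add_mulVec, dotProduct_add,
    ← mulVec_mulVec, dotProduct_transpose_mulVec, dotProduct_comm (g t *ᵥ Z t), smul_mulVec,
    dotProduct_smul, smul_eq_mul] using h

lemma mdown2_secondCovV_add_of_lieMet (hU : IsOpen U) (hg : IsMetricOn U g)
    (hE : SmoothVF U E) (hφ : ContDiffOn ℝ ∞ φ U) (hEφ : ∀ s ∈ U, lieMet E g s = φ s • g s)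
    (hX : SmoothVF U X) (hZ : SmoothVF U Z) (ht : t ∈ U) (Y : VF n) :
    mdown2 g (secondCovV g Y X E) Z t + mdown2 g (secondCovV g Y Z E) X t
      = lieFun Y φ t * mdown2 g X Z t := by
  have conformal : ∀ A B : VF n, ∀ s ∈ U, mdown2 g (covV g A E) B s + mdown2 g A (covV g B E) s
      = φ s * mdown2 g A B s := fun A B s hs =>
    mdown2_covV_add_of_lieMet (hg.eventually_isSymm hU hs) (hg.2 s hs).2 (hEφ s hs) A B
  have hXE := hX.covV hU hg hE
  have hZE := hZ.covV hU hg hE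
  have hderiv := lieFun_congr (X := Y) hU (conformal X Z) ht
  rw [lieFun_add (hg.1.differentiableAt_mdown2 hU hXE hZ ht)
      (hg.1.differentiableAt_mdown2 hU hX hZE ht),
    lieFun_mul (differentiableAt_of_contDiffOn hU hφ ht)
      (hg.1.differentiableAt_mdown2 hU hX hZ ht),
    lieFun_mdown2_eq_covV hU hg hXE hZ ht, lieFun_mdown2_eq_covV hU hg hX hZE ht,
    lieFun_mdown2_eq_covV hU hg hX hZ ht] at hderiv
  have hYX := conformal (covV g Y X) Z t ht
  have hYZ := conformal X (covV g Y Z) t ht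
  simp only [mdown2_comm (hg.2 t ht).1 X] at hderiv hYZ
  rw [mdown2_secondCovV, mdown2_secondCovV, mdown2_comm (hg.2 t ht).1 X]
  linarith

lemma mdown2_secondCovV_of_lieMet (hU : IsOpen U) (hg : IsMetricOn U g)
    (hE : SmoothVF U E) (hφ : ContDiffOn ℝ ∞ φ U) (hEφ : ∀ s ∈ U, lieMet E g s = φ s • g s)
    (hX : SmoothVF U X) (hY : SmoothVF U Y) (hZ : SmoothVF U Z) (ht : t ∈ U) :
    mdown2 g (secondCovV g Y X E) Z t = mdown2 g (curvV g Y E X) Z t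
      + (1/2) * (-mdown2 g X Y t * lieFun Z φ t + lieFun Y φ t * mdown2 g X Z t
          + lieFun X φ t * mdown2 g Y Z t) := by
  have hs := hg.eventually_isSymm hU ht
  have symmetrized : ∀ {A B : VF n}, SmoothVF U A → SmoothVF U B → ∀ C,
      mdown2 g (secondCovV g C A E) B t + mdown2 g (secondCovV g C B E) A t
        = lieFun C φ t * mdown2 g A B t := fun hA hB C =>
    mdown2_secondCovV_add_of_lieMet hU hg hE hφ hEφ hA hB ht C
  have antisymmetrized : ∀ A B C : VF n,
      mdown2 g (secondCovV g A B E) C t - mdown2 g (secondCovV g B A E) C t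
        = mdown2 g (curvV g A B E) C t := fun A B C => by
    simp only [mdown2_eq_dotProduct, ← sub_dotProduct, secondCovV_sub_swap hs]
  have bianchi : mdown2 g (curvV g X Y E) Z t + mdown2 g (curvV g Y Z E) X t
      + mdown2 g (curvV g Z X E) Y t = 0 := by
    linarith [mdown2_curvV_bianchi hU hg hX hY hZ ht E, mdown2_curvV_skew hU hg hX hY hE hZ ht,
      mdown2_curvV_skew hU hg hY hZ hE hX ht, mdown2_curvV_skew hU hg hZ hX hE hY ht]
  have pair_symm : mdown2 g (curvV g Z X E) Y t = mdown2 g (curvV g Y E X) Z t := by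
    rw [mdown2_curvV_pair_symm hU hg hZ hX hE hY ht, mdown2_curvV_swap hs,
      mdown2_curvV_skew hU hg hY hE hZ hX ht, neg_neg]
  linarith [symmetrized hX hZ Y, symmetrized hY hZ X, symmetrized hX hY Z,
    antisymmetrized X Y Z, antisymmetrized Y Z X, antisymmetrized Z X Y]

end ConformalField

end LeviCivita

/-- If L_E h̃ = D̃ h̃ then
h̃((∇_Y(∇E))(X)) = h̃(R_{Y,E}X) + ½[−h̃(X,Y) dD̃ + Y(D̃) h̃(X) + X(D̃) h̃(Y)]. -/
theorem stmt17 {n : ℕ} (U : Set (Pt n)) (hUopen : IsOpen U) (hUne : U.Nonempty)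
    (h' : Met n) (hmet : IsMetricOn U h')
    (E : VF n) (hE : SmoothVF U E)
    (Dt : Pt n → ℝ) (hDt : ContDiffOn ℝ (⊤ : ℕ∞) Dt U)
    (hlie : ∀ t ∈ U, ∀ i j, lieMet E h' t i j = Dt t * h' t i j) :
    ∀ X Y : VF n, SmoothVF U X → SmoothVF U Y → ∀ t ∈ U, ∀ a,
      mdown h' (fun s m => covV h' Y (covV h' X E) s m - covV h' (covV h' Y X) E s m) t a
        = mdown h' (curvV h' Y E X) t a
          + (1/2) * (- mdown2 h' X Y t * pder a Dt t
              + lieFun Y Dt t * mdown h' X t a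
              + lieFun X Dt t * mdown h' Y t a) := by
  intro X Y hX hY t ht a
  have hconf : ∀ s ∈ U, lieMet E h' s = Dt s • h' s := fun s hs => Matrix.ext (hlie s hs)
  simp only [mdown_eq_mdown2_single (hmet.2 t ht).1, ← lieFun_single]
  exact mdown2_secondCovV_of_lieMet hUopen hmet hE hDt hconf hX hY (smoothVF_const _) ht
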